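/- arXiv:1505.04572 — 3 statements merged into one kernel-verified Lean document; each statement's English description precedes it below -/
import Mathlib

section
/- Let ρ > 0, σ > 0, h(ξ) = ∫_ξ^∞ erfc(η) dη, and define φ_a(ξ) = (ρσ/2)·(√h(ξ/σ) − √h(−ξ/σ))². Then lim_{ξ→∞} φ_a(ξ)/ξ = ρ, and by the evenness φ_a(−ξ) = φ_a(ξ) one has φ_a(ξ) ≃ ρ|ξ| as |ξ| → ∞. -/
open MeasureTheory Real Filter Topology

/-- The complementary error function `erfc(x) = (2/√π) ∫_x^∞ e^{−u²} du`. -/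
noncomputable def erfc (x : ℝ) : ℝ := (2 / Real.sqrt π) * ∫ u in Set.Ioi x, Real.exp (-u ^ 2)

/-- `h(ξ) = ∫_ξ^∞ erfc(η) dη`. -/
noncomputable def hfun (ξ : ℝ) : ℝ := ∫ η in Set.Ioi ξ, erfc η

/-- The annealed large deviation function
`φ_a(ξ) = (ρσ/2)(√h(ξ/σ) − √h(−ξ/σ))²`. -/
noncomputable def φa (ρ σ ξ : ℝ) : ℝ :=
  (ρ * σ / 2) * (Real.sqrt (hfun (ξ / σ)) - Real.sqrt (hfun (-ξ / σ))) ^ 2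


lemma gauss_int : Integrable (fun u : ℝ => Real.exp (-u ^ 2)) := by
  simpa using integrable_exp_neg_mul_sq (b := 1) one_pos

lemma erfc_nonneg (x : ℝ) : 0 ≤ erfc x := by
  unfold erfc
  have : 0 ≤ ∫ u in Set.Ioi x, Real.exp (-u ^ 2) :=
    integral_nonneg (fun u => (Real.exp_pos _).le)
  positivity

lemma erfc_anti : Antitone erfc := by
  intro x y hxy
  unfold erfc
  refine mul_le_mul_of_nonneg_left ?_ (by positivity)
  exact setIntegral_mono_set gauss_int.integrableOn
    (Eventually.of_forall fun u => (Real.exp_pos _).le)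
    (Set.Ioi_subset_Ioi hxy).eventuallyLE

lemma exp_intOn (a : ℝ) : IntegrableOn (fun u : ℝ => Real.exp 1 * Real.exp (-u)) (Set.Ioi a) :=
  (integrableOn_exp_neg_Ioi a).const_mul _

lemma erfc_le (x : ℝ) : erfc x ≤ (2 / Real.sqrt π) * (Real.exp 1 * Real.exp (-x)) := by
  unfold erfc
  refine mul_le_mul_of_nonneg_left ?_ (by positivity)
  have h := setIntegral_mono (μ := volume) (s := Set.Ioi x) gauss_int.integrableOn (exp_intOn x)
    (fun u => by
      rw [← Real.exp_add]
      exact Real.exp_le_exp.2 (by nlinarith [sq_nonneg (u - 1/2)]))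
  rwa [integral_const_mul, integral_exp_neg_Ioi] at h

lemma erfc_intOn (a : ℝ) : IntegrableOn erfc (Set.Ioi a) := by
  refine Integrable.mono' ((exp_intOn a).const_mul (2 / Real.sqrt π))
    erfc_anti.measurable.aestronglyMeasurable (Eventually.of_forall fun x => ?_)
  rw [Real.norm_of_nonneg (erfc_nonneg x)]
  exact erfc_le x

lemma erfc_neg (x : ℝ) : erfc (-x) = 2 - erfc x := by
  unfold erfc
  have h1 : ∫ u in Set.Ioi (-x), Real.exp (-u ^ 2) = ∫ u in Set.Iic x, Real.exp (-u ^ 2) := by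
    rw [← integral_comp_neg_Iic]
    simp
  have h2 := intervalIntegral.integral_Iic_add_Ioi (b := x) gauss_int.integrableOn
    gauss_int.integrableOn
  have h3 : ∫ u : ℝ, Real.exp (-u ^ 2) = Real.sqrt π := by
    simpa using integral_gaussian 1
  have h4 : Real.sqrt π ≠ 0 := (Real.sqrt_pos.2 Real.pi_pos).ne'
  rw [h1, eq_sub_iff_add_eq, ← mul_add, h2, h3]
  field_simp

lemma hfun_neg (x : ℝ) : hfun (-x) = 2 * x + hfun x := by
  have h1 := intervalIntegral.integral_interval_add_Ioi (erfc_intOn (-x)) (erfc_intOn 0)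
  have h2 := intervalIntegral.integral_interval_add_Ioi (erfc_intOn 0) (erfc_intOn x)
  have h3 : ∫ η in (-x)..0, erfc η = ∫ η in (0:ℝ)..x, (2 - erfc η) := by
    simp_rw [← erfc_neg]
    rw [intervalIntegral.integral_comp_neg]
    simp
  rw [intervalIntegral.integral_sub (by simp) erfc_anti.intervalIntegrable] at h3
  simp at h3
  unfold hfun
  linarith

lemma hfun_nonneg (x : ℝ) : 0 ≤ hfun x := integral_nonneg erfc_nonneg

lemma hfun_anti : Antitone hfun := by
  intro x y hxy
  exact setIntegral_mono_set (erfc_intOn x) (Eventually.of_forall erfc_nonneg)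
    (Set.Ioi_subset_Ioi hxy).eventuallyLE

/-- `lim_{ξ→∞} φ_a(ξ)/ξ = ρ`, and `φ_a` is even, so `φ_a(ξ) ≃ ρ|ξ|` as `|ξ| → ∞`. -/
theorem annealed_ldf_tail (ρ σ : ℝ) (hρ : 0 < ρ) (hσ : 0 < σ) :
    Tendsto (fun ξ : ℝ => φa ρ σ ξ / ξ) atTop (nhds ρ)
    ∧ (∀ ξ : ℝ, φa ρ σ (-ξ) = φa ρ σ ξ) := by
  constructor
  · have h0 : Tendsto (fun ξ : ℝ => hfun (ξ / σ) / ξ) atTop (nhds 0) := by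
      refine tendsto_of_tendsto_of_tendsto_of_le_of_le' tendsto_const_nhds
        (tendsto_const_nhds.div_atTop tendsto_id : Tendsto (fun ξ : ℝ => hfun 0 / ξ) atTop (nhds 0))
        ?_ ?_
      · filter_upwards [eventually_gt_atTop 0] with ξ hξ
        exact div_nonneg (hfun_nonneg _) hξ.le
      · filter_upwards [eventually_gt_atTop 0] with ξ hξ
        exact div_le_div_of_nonneg_right (hfun_anti (by positivity)) hξ.le
    have h1 : Tendsto (fun ξ : ℝ => (ρ * σ / 2) * (Real.sqrt (hfun (ξ / σ) / ξ)
        - Real.sqrt (2 / σ + hfun (ξ / σ) / ξ)) ^ 2) atTop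
        (nhds ((ρ * σ / 2) * (Real.sqrt 0 - Real.sqrt (2 / σ + 0)) ^ 2)) :=
      ((h0.sqrt.sub (h0.const_add _).sqrt).pow 2).const_mul _
    have h2 : (ρ * σ / 2) * (Real.sqrt 0 - Real.sqrt (2 / σ + 0)) ^ 2 = ρ := by
      rw [Real.sqrt_zero, zero_sub, neg_sq, Real.sq_sqrt (by positivity)]
      field_simp
      try ring
    rw [h2] at h1
    refine h1.congr' ?_
    filter_upwards [eventually_gt_atTop 0] with ξ hξ
    have h3 : 2 / σ + hfun (ξ / σ) / ξ = hfun (-ξ / σ) / ξ := by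
      rw [neg_div, hfun_neg]
      field_simp
    rw [h3, Real.sqrt_div (hfun_nonneg _), Real.sqrt_div (hfun_nonneg _), ← sub_div, div_pow,
      Real.sq_sqrt hξ.le, φa]
    ring
  · intro ξ
    unfold φa
    rw [neg_neg]
    ring
end

section
/- lim_{B→∞} B^{−3/2} · ∫_0^∞ ln(1 + sinh²(B/2)·erfc(η)·erfc(−η)) dη = 2/3. -/
open MeasureTheory Real Filter Topology

lemma erfc_meas : Measurable erfc := erfc_anti.measurable

lemma gauss_half : ∫ u in Set.Ioi (0:ℝ), Real.exp (-u ^ 2) = √π / 2 := by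
  simpa using integral_gaussian_Ioi 1

lemma erfc_zero : erfc 0 = 1 := by
  have : 0 < √π := sqrt_pos.2 pi_pos
  rw [erfc, gauss_half]; field_simp

lemma erfc_le_two (x : ℝ) : erfc x ≤ 2 := by
  have hp : 0 < √π := sqrt_pos.2 pi_pos
  have h : ∫ u in Set.Ioi x, Real.exp (-u ^ 2) ≤ √π := by
    have h1 : ∫ u : ℝ, Real.exp (-u ^ 2) = √π := by simpa using integral_gaussian 1
    rw [← h1]
    exact setIntegral_le_integral gauss_int (Eventually.of_forall fun u => (exp_pos _).le)
  calc erfc x ≤ 2 / √π * √π := mul_le_mul_of_nonneg_left h (by positivity)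
    _ = 2 := by field_simp

lemma erfc_neg_ge (x : ℝ) (hx : 0 ≤ x) : 1 ≤ erfc (-x) := by
  rw [← erfc_zero]; exact erfc_anti (by linarith)

lemma erfc_le_s9 (x : ℝ) (hx : 0 ≤ x) : erfc x ≤ Real.exp (-x ^ 2) := by
  have hp : 0 < √π := sqrt_pos.2 pi_pos
  have h0 : ∫ u in Set.Ioi x, Real.exp (-u ^ 2)
      = ∫ v in Set.Ioi (0:ℝ), Real.exp (-(v + x) ^ 2) := by
    have := (measurePreserving_add_right volume x).setIntegral_preimage_emb
      (measurableEmbedding_addRight x) (fun u : ℝ => Real.exp (-u ^ 2)) (Set.Ioi x)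
    simpa using this.symm
  have h : ∫ u in Set.Ioi x, Real.exp (-u ^ 2) ≤ Real.exp (-x ^ 2) * (√π / 2) := by
    rw [h0, ← gauss_half, ← integral_const_mul]
    refine setIntegral_mono_on (gauss_int.comp_add_right x).integrableOn
      (gauss_int.const_mul _).integrableOn measurableSet_Ioi ?_
    intro v hv
    have hv : 0 < v := hv
    rw [← Real.exp_add]
    apply Real.exp_le_exp.2
    nlinarith [mul_nonneg hv.le hx]
  calc erfc x ≤ 2 / √π * (Real.exp (-x ^ 2) * (√π / 2)) :=
        mul_le_mul_of_nonneg_left h (by positivity)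
    _ = _ := by field_simp

lemma erfc_ge (x : ℝ) (hx : 0 ≤ x) : Real.exp (-(x + 1) ^ 2) ≤ erfc x := by
  have hp : 0 < √π := sqrt_pos.2 pi_pos
  have hp2 : √π ≤ 2 := by
    rw [Real.sqrt_le_left (by norm_num)]; linarith [pi_le_four]
  have h1 : ∫ u in Set.Ioc x (x+1), Real.exp (-(x + 1) ^ 2) = Real.exp (-(x + 1) ^ 2) := by
    simp
  have h : Real.exp (-(x + 1) ^ 2) ≤ ∫ u in Set.Ioi x, Real.exp (-u ^ 2) := by
    rw [← h1]
    refine le_trans (setIntegral_mono_on (by simp) gauss_int.integrableOn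
      measurableSet_Ioc ?_) (setIntegral_mono_set gauss_int.integrableOn
        (Eventually.of_forall fun u => (exp_pos _).le)
        (Set.Ioc_subset_Ioi_self).eventuallyLE)
    intro u hu
    apply Real.exp_le_exp.2
    nlinarith [hu.1, hu.2]
  have h2 : 1 ≤ 2 / √π := by rw [le_div_iff₀ hp]; linarith
  calc _ ≤ ∫ u in Set.Ioi x, Real.exp (-u ^ 2) := h
    _ ≤ erfc x := le_mul_of_one_le_left ((exp_pos _).le.trans h) h2

lemma sinh_le (B : ℝ) (hB : 1 ≤ B) : Real.sinh (B / 2) ^ 2 ≤ Real.exp B / 4 := by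
  have h1 : 0 ≤ Real.sinh (B/2) := Real.sinh_nonneg_iff.2 (by linarith)
  have h2 : Real.sinh (B/2) ≤ Real.exp (B/2) / 2 := by
    rw [Real.sinh_eq]; linarith [exp_pos (-(B/2))]
  have h3 : Real.exp B = Real.exp (B/2) ^ 2 := by rw [← Real.exp_nat_mul]; congr 1; push_cast; ring
  rw [h3]; nlinarith

lemma sinh_ge (B : ℝ) (hB : 1 ≤ B) : Real.exp B / 16 ≤ Real.sinh (B / 2) ^ 2 := by
  have h3 : Real.exp B = Real.exp (B/2) ^ 2 := by rw [← Real.exp_nat_mul]; congr 1; push_cast; ring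
  have h4 : 2 ≤ Real.exp B := by linarith [Real.add_one_le_exp B]
  have h5 : Real.exp (-(B/2)) * Real.exp (B/2) = 1 := by rw [← Real.exp_add]; simp
  have h6 := exp_pos (B/2)
  have h2 : Real.exp (B/2) / 4 ≤ Real.sinh (B/2) := by
    rw [Real.sinh_eq]
    have : Real.exp (-(B/2)) ≤ Real.exp (B/2) / 2 := by
      by_contra hc
      push Not at hc
      nlinarith
    linarith
  rw [h3]; nlinarith

/-- the rescaled integrand -/
noncomputable def gB (B t : ℝ) : ℝ :=
  B⁻¹ * Real.log (1 + Real.sinh (B / 2) ^ 2 * erfc (√B * t) * erfc (-(√B * t)))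

lemma gB_nonneg (B t : ℝ) (hB : 1 ≤ B) : 0 ≤ gB B t := by
  unfold gB
  have := erfc_nonneg (√B * t)
  have := erfc_nonneg (-(√B * t))
  refine mul_nonneg (by positivity) (Real.log_nonneg ?_)
  have : 0 ≤ Real.sinh (B / 2) ^ 2 * erfc (√B * t) * erfc (-(√B * t)) := by positivity
  linarith

lemma gB_le (B t : ℝ) (hB : 1 ≤ B) (ht : 0 ≤ t) :
    gB B t ≤ B⁻¹ * Real.log (1 + Real.exp (B * (1 - t ^ 2))) := by
  unfold gB
  have h0 := erfc_nonneg (√B * t)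
  have h1 := erfc_nonneg (-(√B * t))
  have h2 := erfc_le_two (-(√B * t))
  have h3 := erfc_le_s9 (√B * t) (by positivity)
  have h4 := sinh_le B hB
  have h5 : (√B * t) ^ 2 = B * t ^ 2 := by rw [mul_pow, Real.sq_sqrt (by linarith)]
  refine mul_le_mul_of_nonneg_left (Real.log_le_log (by positivity) ?_) (by positivity)
  have : Real.sinh (B / 2) ^ 2 * erfc (√B * t) * erfc (-(√B * t))
      ≤ Real.exp B / 4 * Real.exp (-(√B * t) ^ 2) * 2 := by gcongr
  have h6 : Real.exp (B * (1 - t ^ 2)) = Real.exp B * Real.exp (-(√B * t) ^ 2) := by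
    rw [← Real.exp_add, h5]; congr 1; ring
  rw [h6]
  have : 0 < Real.exp B * Real.exp (-(√B * t) ^ 2) := by positivity
  linarith

lemma gB_le_dom (B t : ℝ) (hB : 1 ≤ B) (ht : 0 ≤ t) :
    gB B t ≤ Real.exp 1 * Real.exp (-t ^ 2) := by
  refine (gB_le B t hB ht).trans ?_
  have hB0 : 0 < B := by linarith
  have h1 : 1 + Real.exp (B * (1 - t ^ 2)) ≤ (1 + Real.exp (1 - t ^ 2)) ^ B := by
    have := Real.add_rpow_le_rpow_add (a := 1) (b := Real.exp (1 - t ^ 2)) zero_le_one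
      (exp_pos _).le hB
    rwa [Real.one_rpow, ← Real.exp_mul, mul_comm] at this
  have h2 := Real.log_le_log (by positivity) h1
  rw [Real.log_rpow (by positivity)] at h2
  have h3 := Real.log_le_sub_one_of_pos (x := 1 + Real.exp (1 - t ^ 2)) (by positivity)
  have h4 : Real.exp 1 * Real.exp (-t ^ 2) = Real.exp (1 - t ^ 2) := by
    rw [← Real.exp_add]; congr 1
  rw [h4, inv_mul_le_iff₀ hB0]
  nlinarith

lemma gB_le_lim (B t : ℝ) (hB : 1 ≤ B) (ht : 0 ≤ t) :
    gB B t ≤ max (1 - t ^ 2) 0 + Real.log 2 * B⁻¹ := by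
  refine (gB_le B t hB ht).trans ?_
  have hB0 : 0 < B := by linarith
  have h1 : 1 + Real.exp (B * (1 - t ^ 2)) ≤ 2 * Real.exp (B * max (1 - t ^ 2) 0) := by
    have : (1:ℝ) ≤ Real.exp (B * max (1 - t ^ 2) 0) := Real.one_le_exp (by positivity)
    have : Real.exp (B * (1 - t ^ 2)) ≤ Real.exp (B * max (1 - t ^ 2) 0) := by
      gcongr; exact le_max_left _ _
    linarith
  have h2 := Real.log_le_log (by positivity) h1
  rw [Real.log_mul (by norm_num) (by positivity), Real.log_exp] at h2
  rw [inv_mul_le_iff₀ hB0]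
  refine h2.trans (le_of_eq ?_)
  field_simp
  ring

lemma gB_ge_lim (B t : ℝ) (hB : 1 ≤ B) (ht : 0 ≤ t) :
    max (1 - t ^ 2 - 2 * t * (√B)⁻¹ - (1 + Real.log 16) * B⁻¹) 0 ≤ gB B t := by
  refine max_le ?_ (gB_nonneg B t hB)
  unfold gB
  have hB0 : 0 < B := by linarith
  have hs : 0 < √B := sqrt_pos.2 hB0
  have h0 := erfc_nonneg (√B * t)
  have h2 := erfc_neg_ge (√B * t) (by positivity)
  have h3 := erfc_ge (√B * t) (by positivity)
  have h4 := sinh_ge B hB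
  have h5 : √B ^ 2 = B := Real.sq_sqrt (by linarith)
  have h6 : Real.exp B / 16 * Real.exp (-(√B * t + 1) ^ 2) * 1 ≤
      Real.sinh (B / 2) ^ 2 * erfc (√B * t) * erfc (-(√B * t)) := by gcongr
  have h7 := Real.log_le_log (by positivity)
    (h6.trans (le_add_of_nonneg_left (zero_le_one)))
  rw [mul_one, Real.log_mul (by positivity) (by positivity),
    Real.log_div (by positivity) (by norm_num), Real.log_exp, Real.log_exp] at h7
  rw [inv_mul_eq_div, le_div_iff₀ hB0]
  refine le_trans (le_of_eq ?_) h7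
  have h8 : (√B)⁻¹ * B = √B := by
    nth_rewrite 2 [← h5]; field_simp
  have h9 : B⁻¹ * B = 1 := by field_simp
  calc _ = (1 - t ^ 2) * B - 2 * t * ((√B)⁻¹ * B) - (1 + Real.log 16) * (B⁻¹ * B) := by ring
    _ = _ := by rw [h8, h9]; linear_combination t ^ 2 * h5

lemma gB_tendsto (t : ℝ) (ht : 0 ≤ t) :
    Tendsto (fun B => gB B t) atTop (𝓝 (max (1 - t ^ 2) 0)) := by
  have hi : Tendsto (fun B : ℝ => B⁻¹) atTop (𝓝 0) := tendsto_inv_atTop_zero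
  have hs : Tendsto (fun B : ℝ => (√B)⁻¹) atTop (𝓝 0) :=
    tendsto_inv_atTop_zero.comp Real.tendsto_sqrt_atTop
  have hl : Tendsto (fun B : ℝ => max (1 - t ^ 2 - 2 * t * (√B)⁻¹ - (1 + Real.log 16) * B⁻¹) 0)
      atTop (𝓝 (max (1 - t ^ 2) 0)) := by
    have := ((tendsto_const_nhds (x := 1 - t ^ 2)).sub (hs.const_mul (2 * t))).sub
      (hi.const_mul (1 + Real.log 16))
    have := this.max (tendsto_const_nhds (x := (0:ℝ)))
    simpa using this
  have hu : Tendsto (fun B : ℝ => max (1 - t ^ 2) 0 + Real.log 2 * B⁻¹)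
      atTop (𝓝 (max (1 - t ^ 2) 0)) := by
    simpa using (tendsto_const_nhds (x := max (1 - t ^ 2) 0)).add (hi.const_mul (Real.log 2))
  refine tendsto_of_tendsto_of_tendsto_of_le_of_le' hl hu ?_ ?_
  · filter_upwards [eventually_ge_atTop 1] with B hB using gB_ge_lim B t hB ht
  · filter_upwards [eventually_ge_atTop 1] with B hB using gB_le_lim B t hB ht

lemma lim_int : ∫ t in Set.Ioi (0:ℝ), max (1 - t ^ 2) 0 = 2 / 3 := by
  have h : ∫ t in Set.Ioi (0:ℝ), max (1 - t ^ 2) 0 = ∫ t in Set.Ioc (0:ℝ) 1, max (1 - t ^ 2) 0 := by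
    refine (setIntegral_eq_of_subset_of_forall_sdiff_eq_zero measurableSet_Ioi
      Set.Ioc_subset_Ioi_self ?_)
    intro t ht
    have h0 : 0 < t := ht.1
    have h1 : 1 < t := by
      by_contra hc
      exact ht.2 ⟨h0, not_lt.1 hc⟩
    exact max_eq_right (by nlinarith)
  have h' : ∫ t in Set.Ioc (0:ℝ) 1, max (1 - t ^ 2) 0 = ∫ t in Set.Ioc (0:ℝ) 1, (1 - t ^ 2) := by
    refine setIntegral_congr_fun measurableSet_Ioc ?_
    intro t ht
    exact max_eq_left (by nlinarith [ht.1, ht.2])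
  rw [h, h', ← intervalIntegral.integral_of_le zero_le_one, intervalIntegral.integral_sub
    (by simp) (by apply Continuous.intervalIntegrable; fun_prop)]
  simp
  norm_num

lemma scale (B : ℝ) (hB : 1 ≤ B) :
    B ^ (-(3 : ℝ) / 2) * ∫ η in Set.Ioi (0 : ℝ),
      Real.log (1 + Real.sinh (B / 2) ^ 2 * erfc η * erfc (-η)) =
    ∫ t in Set.Ioi (0:ℝ), gB B t := by
  have hB0 : 0 < B := by linarith
  have hs : 0 < √B := sqrt_pos.2 hB0
  unfold gB
  rw [integral_const_mul, integral_comp_mul_left_Ioi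
    (fun η => Real.log (1 + Real.sinh (B / 2) ^ 2 * erfc η * erfc (-η))) 0 hs, mul_zero,
    smul_eq_mul, ← mul_assoc]
  congr 1
  rw [Real.sqrt_eq_rpow, ← Real.rpow_neg hB0.le, ← Real.rpow_neg_one B, ← Real.rpow_add hB0]
  norm_num

/-- `lim_{B→∞} B^{−3/2} ∫_0^∞ ln(1 + sinh²(B/2)·erfc(η)·erfc(−η)) dη = 2/3`. -/
theorem quenched_integral_growth :
    Tendsto (fun B : ℝ =>
        B ^ (-(3 : ℝ) / 2) *
          ∫ η in Set.Ioi (0 : ℝ),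
            Real.log (1 + Real.sinh (B / 2) ^ 2 * erfc η * erfc (-η)))
      atTop (nhds (2 / 3)) := by
  have key : Tendsto (fun B => ∫ t in Set.Ioi (0:ℝ), gB B t) atTop
      (𝓝 (∫ t in Set.Ioi (0:ℝ), max (1 - t ^ 2) 0)) := by
    refine tendsto_integral_filter_of_dominated_convergence
      (fun t => Real.exp 1 * Real.exp (-t ^ 2)) ?_ ?_ ?_ ?_
    · refine Eventually.of_forall fun B => Measurable.aestronglyMeasurable ?_
      have := erfc_meas
      unfold gB
      fun_prop
    · filter_upwards [eventually_ge_atTop 1] with B hB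
      refine (ae_restrict_iff' measurableSet_Ioi).2 (Eventually.of_forall fun t ht => ?_)
      rw [Real.norm_of_nonneg (gB_nonneg B t hB)]
      exact gB_le_dom B t hB (le_of_lt ht)
    · exact (gauss_int.const_mul _).integrableOn
    · exact (ae_restrict_iff' measurableSet_Ioi).2
        (Eventually.of_forall fun t ht => gB_tendsto t (le_of_lt ht))
  rw [lim_int] at key
  refine key.congr' ?_
  filter_upwards [eventually_ge_atTop 1] with B hB using (scale B hB).symm
end

section
/- Let σ > 0, 0 < t₁ < t₂, and y, x₁, x₂, B₁, B₂ be real numbers, and let g(z, t | y, s) = (πσ²(t−s))^{−1/2} exp(−(z−y)²/(σ²(t−s))) for t > s. Then ∫_ℝ ∫_ℝ e^{B₁·1_{u₁>x₁} + B₂·1_{u₂>x₂}} · g(u₂, t₂ | u₁, t₁) · g(u₁, t₁ | y, 0) du₂ du₁ = 1 + ((e^{B₁} − 1)/2)·erfc((x₁ − y)/(σ√t₁)) + ((e^{B₂} − 1)/2)·erfc((x₂ − y)/(σ√t₂)) + (e^{B₁} − 1)(e^{B₂} − 1) · ∫_{x₁}^∞ ∫_{x₂}^∞ g(u₂, t₂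 | u₁, t₁) · g(u₁, t₁ | y, 0) du₂ du₁. -/
open MeasureTheory Real

/-- The Brownian transition density
`g(z, t | y, s) = (πσ²(t−s))^{−1/2} exp(−(z−y)²/(σ²(t−s)))`. -/
noncomputable def g (σ z t y s : ℝ) : ℝ :=
  (Real.sqrt (π * σ ^ 2 * (t - s)))⁻¹ * Real.exp (-(z - y) ^ 2 / (σ ^ 2 * (t - s)))

/-- Centered Gaussian kernel with parameter `c` (variance `c / 2`). -/
noncomputable def gaussK (c w : ℝ) : ℝ := (Real.sqrt (π * c))⁻¹ * Real.exp (-w ^ 2 / c)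

lemma gaussK_nonneg (c w : ℝ) : 0 ≤ gaussK c w := by unfold gaussK; positivity

lemma gaussK_cont (c : ℝ) : Continuous (gaussK c) := by unfold gaussK; fun_prop

lemma gaussK_integrable {c : ℝ} (hc : 0 < c) : Integrable (gaussK c) := by
  unfold gaussK
  refine Integrable.const_mul ?_ _
  refine (integrable_exp_neg_mul_sq (inv_pos.mpr hc)).congr (ae_of_all _ fun w => ?_)
  simp only
  congr 1
  field_simp

lemma gaussK_integral {c : ℝ} (hc : 0 < c) : ∫ w, gaussK c w = 1 := by
  unfold gaussK
  rw [integral_const_mul]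
  have h := integral_gaussian c⁻¹
  have h2 : ∀ w : ℝ, Real.exp (-w ^ 2 / c) = Real.exp (-c⁻¹ * w ^ 2) := fun w => by
    congr 1
    field_simp
  simp only [h2]
  rw [h, div_inv_eq_mul]
  exact inv_mul_cancel₀ (by positivity)

lemma gaussK_mul {a b : ℝ} (ha : 0 < a) (hb : 0 < b) (z u y : ℝ) :
    gaussK a (z - u) * gaussK b (u - y)
      = gaussK (a + b) (z - y) * gaussK (a * b / (a + b)) (u - (b * z + a * y) / (a + b)) := by
  unfold gaussK
  have e1 : ∀ p q r s : ℝ, p⁻¹ * r * (q⁻¹ * s) = (p * q)⁻¹ * (r * s) := by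
    intros; rw [mul_inv]; ring
  rw [e1, e1, ← Real.sqrt_mul (by positivity), ← Real.sqrt_mul (by positivity), ← Real.exp_add,
    ← Real.exp_add]
  congr 2
  · congr 1
    field_simp
  · field_simp
    ring

lemma gaussK_conv {a b : ℝ} (ha : 0 < a) (hb : 0 < b) (z y : ℝ) :
    ∫ u, gaussK a (z - u) * gaussK b (u - y) = gaussK (a + b) (z - y) := by
  simp only [gaussK_mul ha hb]
  rw [integral_const_mul, integral_sub_right_eq_self (gaussK (a * b / (a + b))),
    gaussK_integral (by positivity), mul_one]

lemma gaussK_tail {r : ℝ} (hr : 0 < r) (x y : ℝ) :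
    ∫ u in Set.Ioi x, gaussK (r ^ 2) (u - y) = erfc ((x - y) / r) / 2 := by
  have h1 : ∫ u in Set.Ioi x, gaussK (r ^ 2) (u - y)
      = ∫ v in Set.Ioi (x - y), gaussK (r ^ 2) v := by
    rw [← integral_indicator measurableSet_Ioi, ← integral_indicator measurableSet_Ioi,
      
      ← integral_sub_right_eq_self ((Set.Ioi (x - y)).indicator fun v => gaussK (r ^ 2) v) y]
    congr 1
    ext u
    simp [Set.indicator_apply]
  have h2 := integral_comp_mul_left_Ioi (fun v => gaussK (r ^ 2) v) ((x - y) / r) hr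
  rw [mul_div_cancel₀ _ hr.ne'] at h2
  have h3 : ∀ v, gaussK (r ^ 2) (r * v) = (r * Real.sqrt π)⁻¹ * Real.exp (-v ^ 2) := by
    intro v
    unfold gaussK
    rw [mul_comm π, Real.sqrt_mul (by positivity), Real.sqrt_sq hr.le]
    congr 2
    field_simp
  simp only [h3, integral_const_mul, smul_eq_mul] at h2
  rw [h1, erfc]
  have hp : 0 < Real.sqrt π := by positivity
  field_simp at h2 ⊢
  linarith

lemma gaussK_prod_integrable {a b : ℝ} (ha : 0 < a) (hb : 0 < b) (y : ℝ) :
    Integrable (fun p : ℝ × ℝ => gaussK a (p.2 - p.1) * gaussK b (p.1 - y))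
      (volume.prod volume) := by
  have hc : Continuous (fun p : ℝ × ℝ => gaussK a (p.2 - p.1) * gaussK b (p.1 - y)) :=
    ((gaussK_cont a).comp (by fun_prop)).mul ((gaussK_cont b).comp (by fun_prop))
  rw [integrable_prod_iff hc.aestronglyMeasurable]
  refine ⟨ae_of_all _ fun u =>
    ((gaussK_integrable ha).comp_sub_right u).mul_const (gaussK b (u - y)), ?_⟩
  refine ((gaussK_integrable hb).comp_sub_right y).congr (ae_of_all _ fun u => ?_)
  simp only [Real.norm_eq_abs, abs_mul, abs_of_nonneg (gaussK_nonneg _ _)]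
  rw [integral_mul_const, integral_sub_right_eq_self (gaussK a), gaussK_integral ha, one_mul]

lemma exp_ind (B x u : ℝ) : Real.exp (B * (Set.Ioi x).indicator (fun _ => (1 : ℝ)) u)
    = 1 + (Real.exp B - 1) * (Set.Ioi x).indicator (fun _ => (1 : ℝ)) u := by
  by_cases h : u ∈ Set.Ioi x <;> simp [Set.indicator_apply, h]

lemma integral_exp_ind (B x : ℝ) {f : ℝ → ℝ} (hf : Integrable f) :
    ∫ u, Real.exp (B * (Set.Ioi x).indicator (fun _ => (1 : ℝ)) u) * f u
      = (∫ u, f u) + (Real.exp B - 1) * ∫ u in Set.Ioi x, f u := by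
  rw [← integral_indicator measurableSet_Ioi, ← integral_const_mul,
    ← integral_add hf ((hf.indicator measurableSet_Ioi).const_mul _)]
  congr 1
  ext u
  rw [exp_ind]
  by_cases h : u ∈ Set.Ioi x
  · simp [h]; ring
  · simp [h]

lemma gaussK_main {a b : ℝ} (ha : 0 < a) (hb : 0 < b) (y x₁ x₂ B₁ B₂ : ℝ) :
    (∫ u₁ : ℝ, ∫ u₂ : ℝ,
        Real.exp (B₁ * (Set.Ioi x₁).indicator (fun _ => (1 : ℝ)) u₁
            + B₂ * (Set.Ioi x₂).indicator (fun _ => (1 : ℝ)) u₂) *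
          (gaussK a (u₂ - u₁) * gaussK b (u₁ - y)))
      = 1 + (Real.exp B₁ - 1) * (∫ u in Set.Ioi x₁, gaussK b (u - y))
          + (Real.exp B₂ - 1) * (∫ u in Set.Ioi x₂, gaussK (a + b) (u - y))
          + (Real.exp B₁ - 1) * (Real.exp B₂ - 1) *
              ∫ u₁ in Set.Ioi x₁, ∫ u₂ in Set.Ioi x₂,
                gaussK a (u₂ - u₁) * gaussK b (u₁ - y) := by
  have hP := gaussK_prod_integrable ha hb y
  have hP2 : Integrable (fun p : ℝ × ℝ => gaussK a (p.2 - p.1) * gaussK b (p.1 - y))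
      (volume.prod (volume.restrict (Set.Ioi x₂))) :=
    hP.mono_measure (Measure.prod_mono le_rfl Measure.restrict_le_self)
  have hH : Integrable (fun u₁ : ℝ => (Real.exp B₂ - 1) *
      ∫ u₂ in Set.Ioi x₂, gaussK a (u₂ - u₁) * gaussK b (u₁ - y)) :=
    hP2.integral_prod_left.const_mul _
  have hb' := (gaussK_integrable hb).comp_sub_right y
  have hin : ∀ u₁ : ℝ, (∫ u₂ : ℝ,
        Real.exp (B₁ * (Set.Ioi x₁).indicator (fun _ => (1 : ℝ)) u₁
            + B₂ * (Set.Ioi x₂).indicator (fun _ => (1 : ℝ)) u₂) *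
          (gaussK a (u₂ - u₁) * gaussK b (u₁ - y)))
      = Real.exp (B₁ * (Set.Ioi x₁).indicator (fun _ => (1 : ℝ)) u₁) *
        (gaussK b (u₁ - y) + (Real.exp B₂ - 1) *
          ∫ u₂ in Set.Ioi x₂, gaussK a (u₂ - u₁) * gaussK b (u₁ - y)) := by
    intro u₁
    simp only [Real.exp_add, mul_assoc]
    rw [integral_const_mul, integral_exp_ind B₂ x₂
      (((gaussK_integrable ha).comp_sub_right u₁).mul_const _)]
    congr 2
    rw [integral_mul_const, integral_sub_right_eq_self (gaussK a), gaussK_integral ha, one_mul]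
  simp only [hin]
  rw [integral_exp_ind B₁ x₁ (f := fun u₁ => gaussK b (u₁ - y) + (Real.exp B₂ - 1) *
      ∫ u₂ in Set.Ioi x₂, gaussK a (u₂ - u₁) * gaussK b (u₁ - y)) (hb'.add hH), integral_add hb' hH,
    integral_add hb'.integrableOn hH.integrableOn, integral_const_mul,
    integral_const_mul, integral_sub_right_eq_self (gaussK b), gaussK_integral hb]
  have hswap : ∫ u₁, ∫ u₂ in Set.Ioi x₂, gaussK a (u₂ - u₁) * gaussK b (u₁ - y)
      = ∫ u in Set.Ioi x₂, gaussK (a + b) (u - y) := by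
    rw [integral_integral_swap hP2]
    simp only [gaussK_conv ha hb]
  rw [hswap]
  ring

lemma g_eq (σ z t y s : ℝ) : g σ z t y s = gaussK (σ ^ 2 * (t - s)) (z - y) := by
  unfold g gaussK
  rw [mul_assoc]

/-- The two-time single-particle contribution:
`∫∫ e^{B₁·1_{u₁>x₁} + B₂·1_{u₂>x₂}} g(u₂,t₂|u₁,t₁) g(u₁,t₁|y,0) du₂ du₁
 = 1 + ((e^{B₁}−1)/2)·erfc((x₁−y)/(σ√t₁)) + ((e^{B₂}−1)/2)·erfc((x₂−y)/(σ√t₂))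
   + (e^{B₁}−1)(e^{B₂}−1) ∫_{x₁}^∞ ∫_{x₂}^∞ g(u₂,t₂|u₁,t₁) g(u₁,t₁|y,0) du₂ du₁`. -/
theorem two_time_single_particle_contribution (σ t₁ t₂ : ℝ) (hσ : 0 < σ)
    (ht₁ : 0 < t₁) (ht₁₂ : t₁ < t₂) (y x₁ x₂ B₁ B₂ : ℝ) :
    (∫ u₁ : ℝ, ∫ u₂ : ℝ,
        Real.exp (B₁ * (Set.Ioi x₁).indicator (fun _ => (1 : ℝ)) u₁
            + B₂ * (Set.Ioi x₂).indicator (fun _ => (1 : ℝ)) u₂) *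
          (g σ u₂ t₂ u₁ t₁ * g σ u₁ t₁ y 0))
      = 1 + (Real.exp B₁ - 1) / 2 * erfc ((x₁ - y) / (σ * Real.sqrt t₁))
          + (Real.exp B₂ - 1) / 2 * erfc ((x₂ - y) / (σ * Real.sqrt t₂))
          + (Real.exp B₁ - 1) * (Real.exp B₂ - 1) *
              ∫ u₁ in Set.Ioi x₁, ∫ u₂ in Set.Ioi x₂,
                g σ u₂ t₂ u₁ t₁ * g σ u₁ t₁ y 0 := by
  simp only [g_eq]
  have ha : 0 < σ ^ 2 * (t₂ - t₁) := mul_pos (by positivity) (sub_pos.mpr ht₁₂)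
  have hb : 0 < σ ^ 2 * (t₁ - 0) := by rw [sub_zero]; positivity
  have ht₂ : 0 < t₂ := ht₁.trans ht₁₂
  rw [gaussK_main ha hb]
  have e1 : σ ^ 2 * (t₁ - 0) = (σ * Real.sqrt t₁) ^ 2 := by
    rw [mul_pow, Real.sq_sqrt ht₁.le, sub_zero]
  have e2 : σ ^ 2 * (t₂ - t₁) + σ ^ 2 * (t₁ - 0) = (σ * Real.sqrt t₂) ^ 2 := by
    rw [mul_pow, Real.sq_sqrt ht₂.le]; ring
  have h1 := gaussK_tail (r := σ * Real.sqrt t₁) (by positivity) x₁ y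
  have h2 := gaussK_tail (r := σ * Real.sqrt t₂) (by positivity) x₂ y
  rw [← e1] at h1
  rw [← e2] at h2
  rw [h1, h2]
  ring
end
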